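/- arXiv:2007.07639 — 3 statements merged into one kernel-verified Lean document; each statement's English description precedes it below -/
import Mathlib

section
/- Suppose G is connected. If there exists a nonzero real vector b with W b = -b (i.e., -1 is an eigenvalue of W), then G is bipartite. Combined with the converse, for a connected graph: -1 is an eigenvalue of W if and only if G is bipartite. -/
/-!
Let `W` be row-stochastic and `W b = -b`. At a vertex `i` where `|b|` is maximal, `-b i` is an
average of the values `b j` over the out-neighbours `j` of `i`, none of which exceeds `|b i|` in
absolute value; hence all of them equal `-b i`, and `|b|` is maximal at each of them as well.
When every vertex is reachable from every other one, `b` therefore has constant absolute value and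
changes sign along every edge, so that `{i | 0 < b i}` is one side of a bipartition. Conversely,
the vector with value `1` on one side of a bipartition and `-1` on the other changes sign along
every edge, and `W` negates any such vector.
-/

open Matrix Relation

lemma add_mul_nonneg_of_abs_le {R : Type*} [Ring R] [LinearOrder R] [IsOrderedRing R] {x y : R}
    (h : |y| ≤ |x|) : 0 ≤ (x + y) * x := by
  have habs : |y * x| ≤ x * x := by
    rw [abs_mul, ← abs_mul_abs_self x]
    exact mul_le_mul_of_nonneg_right h (abs_nonneg x)
  rw [add_mul, ← neg_le_iff_add_nonneg']
  exact (abs_le.1 habs).1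

section RowStochastic

variable {V R : Type*} [Fintype V] [DecidableEq V] [Ring R] {W : Matrix V V R} {b : V → R}

lemma mulVec_eq_neg_of_forall_eq_neg [PartialOrder R] [IsOrderedRing R]
    (hW : W ∈ rowStochastic R V) (hb : ∀ i j, 0 < W i j → b j = -b i) : W *ᵥ b = -b := by
  ext i
  have hterm (j : V) : W i j * b j = W i j * -b i := by
    obtain hzero | hpos := (nonneg_of_mem_rowStochastic hW (i := i) (j := j)).eq_or_lt
    · rw [← hzero, zero_mul, zero_mul]
    · rw [hb i j hpos]
  calc (W *ᵥ b) i = ∑ j, W i j * -b i := Finset.sum_congr rfl fun j _ ↦ hterm j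
    _ = -b i := by rw [← Finset.sum_mul, sum_row_of_mem_rowStochastic hW, one_mul]

variable [LinearOrder R] [IsStrictOrderedRing R]

lemma eq_neg_of_mulVec_eq_neg_of_forall_abs_le (hW : W ∈ rowStochastic R V)
    (hb : W *ᵥ b = -b) {i j : V} (hmax : ∀ k, |b k| ≤ |b i|) (hij : 0 < W i j) :
    b j = -b i := by
  have hnonneg (k : V) : 0 ≤ W i k * ((b i + b k) * b i) :=
    mul_nonneg (nonneg_of_mem_rowStochastic hW) (add_mul_nonneg_of_abs_le (hmax k))
  have hmean : ∑ k, W i k * (b i + b k) = 0 := by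
    have hbi : ∑ k, W i k * b k = -b i := congrFun hb i
    simp only [mul_add, Finset.sum_add_distrib, ← Finset.sum_mul,
      sum_row_of_mem_rowStochastic hW, one_mul, hbi, add_neg_cancel]
  have hsum : ∑ k, W i k * ((b i + b k) * b i) = 0 := by
    simp only [← mul_assoc, ← Finset.sum_mul, hmean, zero_mul]
  have hterm : W i j * ((b i + b j) * b i) = 0 :=
    congrFun ((Fintype.sum_eq_zero_iff_of_nonneg hnonneg).1 hsum) j
  obtain hadd | hbi := mul_eq_zero.1 ((mul_eq_zero.1 hterm).resolve_left hij.ne')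
  · exact (neg_eq_of_add_eq_zero_right hadd).symm
  · have hbj : b j = 0 := by simpa only [hbi, abs_zero, abs_nonpos_iff] using hmax j
    rw [hbi, hbj, neg_zero]

lemma abs_le_abs_of_mulVec_eq_neg (hW : W ∈ rowStochastic R V)
    (hconn : ∀ i j, ReflTransGen (fun i j ↦ 0 < W i j) i j) (hb : W *ᵥ b = -b) (i k : V) :
    |b k| ≤ |b i| := by
  have : Nonempty V := ⟨i⟩
  obtain ⟨m, hm⟩ := Finite.exists_max fun l ↦ |b l|
  suffices hi : |b i| = |b m| from hi ▸ hm k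
  induction hconn m i with
  | refl => rfl
  | @tail u v _ huv ih =>
    have hbv : b v = -b u := eq_neg_of_mulVec_eq_neg_of_forall_abs_le hW hb (ih ▸ hm) huv
    rw [hbv, abs_neg, ih]

lemma mulVec_eq_neg_iff_forall_eq_neg (hW : W ∈ rowStochastic R V)
    (hconn : ∀ i j, ReflTransGen (fun i j ↦ 0 < W i j) i j) :
    W *ᵥ b = -b ↔ ∀ i j, 0 < W i j → b j = -b i :=
  ⟨fun hb i _ ↦ eq_neg_of_mulVec_eq_neg_of_forall_abs_le hW hb
    (abs_le_abs_of_mulVec_eq_neg hW hconn hb i), mulVec_eq_neg_of_forall_eq_neg hW⟩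

lemma apply_ne_zero_of_mulVec_eq_neg (hW : W ∈ rowStochastic R V)
    (hconn : ∀ i j, ReflTransGen (fun i j ↦ 0 < W i j) i j) (hb : W *ᵥ b = -b) (hb0 : b ≠ 0)
    (i : V) : b i ≠ 0 := by
  obtain ⟨k, hk⟩ := Function.ne_iff.1 hb0
  exact abs_pos.1 ((abs_pos.2 hk).trans_le (abs_le_abs_of_mulVec_eq_neg hW hconn hb i k))

theorem minus_one_eigenvalue_iff_bipartite_general [Nonempty V] (hW : W ∈ rowStochastic R V)
    (hconn : ∀ i j, ReflTransGen (fun i j ↦ 0 < W i j) i j) :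
    (∃ b : V → R, b ≠ 0 ∧ W *ᵥ b = -b)
      ↔ ∃ S : Set V, ∀ i j, 0 < W i j → (i ∈ S ↔ j ∉ S) := by
  classical
  constructor
  · rintro ⟨b, hb0, hb⟩
    refine ⟨{i | 0 < b i}, fun i j hij ↦ ?_⟩
    have hbj : b j = -b i := (mulVec_eq_neg_iff_forall_eq_neg hW hconn).1 hb i j hij
    have hbi : b i ≠ 0 := apply_ne_zero_of_mulVec_eq_neg hW hconn hb hb0 i
    simp only [Set.mem_ofPred_eq, hbj, not_lt, Left.neg_nonpos_iff, hbi.symm.le_iff_lt]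
  · rintro ⟨S, hS⟩
    refine ⟨fun i ↦ if i ∈ S then 1 else -1, ?_,
      (mulVec_eq_neg_iff_forall_eq_neg hW hconn).2 fun i j hij ↦ ?_⟩
    · refine Function.ne_iff.2 ⟨Classical.arbitrary V, ?_⟩
      split_ifs <;> simp
    · by_cases hj : j ∈ S <;> simp [hS i j hij, hj]

end RowStochastic

section RandomWalk

variable {V K : Type*} [Fintype V] [Field K]

/-- The transition matrix `D⁻¹A` of the random walk on a graph with weighted adjacency matrix `A`.
A row of `A` with sum zero yields a zero row. -/
def randomWalkMatrix (A : Matrix V V K) : Matrix V V K :=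
  of fun i j ↦ A i j / ∑ k, A i k

variable [LinearOrder K] [IsStrictOrderedRing K] {A : Matrix V V K}

lemma randomWalkMatrix_mem_rowStochastic [DecidableEq V] (hA : ∀ i j, 0 ≤ A i j)
    (hdeg : ∀ i, 0 < ∑ j, A i j) : randomWalkMatrix A ∈ rowStochastic K V :=
  mem_rowStochastic_iff_sum.2 ⟨fun i j ↦ div_nonneg (hA i j) (hdeg i).le, fun i ↦
    (Finset.sum_div ..).symm.trans (div_self (hdeg i).ne')⟩

lemma randomWalkMatrix_pos_iff {i j : V} (hdeg : 0 < ∑ k, A i k) :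
    0 < randomWalkMatrix A i j ↔ 0 < A i j :=
  div_pos_iff_of_pos_right hdeg

end RandomWalk

lemma reflTransGen_of_preconnected_fromRel {V : Type*} {r : V → V → Prop}
    (hr : ∀ i j, r i j → r j i) (hconn : (SimpleGraph.fromRel r).Preconnected) (i j : V) :
    ReflTransGen r i j :=
  ReflTransGen.mono (fun u v huv ↦ ((SimpleGraph.fromRel_adj r u v).1 huv).2.elim id (hr v u)) i j
    ((SimpleGraph.reachable_iff_reflTransGen i j).1 (hconn i j))

/-- For a connected graph, `-1` is an eigenvalue of the random-walk transition matrix `W`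
(i.e. there is a nonzero `b` with `W b = -b`) if and only if the graph is bipartite. -/
theorem minus_one_eigenvalue_iff_bipartite
    (n : ℕ) (hn : 1 ≤ n) (A : Matrix (Fin n) (Fin n) ℝ)
    (hsymm : ∀ i j, A i j = A j i)
    (h01 : ∀ i j, A i j = 0 ∨ A i j = 1)
    (hdiag : ∀ i, A i i = 0)
    (hdeg : ∀ i, 0 < ∑ j, A i j)
    (hconn : (SimpleGraph.fromRel (fun i j => A i j = 1)).Connected)
    (W : Matrix (Fin n) (Fin n) ℝ)
    (hW : ∀ i j, W i j = A i j / ∑ k, A i k) :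
    (∃ b : Fin n → ℝ, b ≠ 0 ∧ W.mulVec b = -b)
      ↔ ∃ S : Set (Fin n), ∀ i j, A i j = 1 → (i ∈ S ↔ j ∉ S) := by
  obtain rfl : W = randomWalkMatrix A := Matrix.ext hW
  have : Nonempty (Fin n) := hconn.nonempty
  have hnonneg (i j) : 0 ≤ A i j := by
    rcases h01 i j with h | h <;> simp [h]
  have hedge (i j) : 0 < randomWalkMatrix A i j ↔ A i j = 1 := by
    rw [randomWalkMatrix_pos_iff (hdeg i)]
    rcases h01 i j with h | h <;> simp [h]
  have hreach := reflTransGen_of_preconnected_fromRel (fun i j h ↦ hsymm j i ▸ h)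
    hconn.preconnected
  simpa only [hedge] using minus_one_eigenvalue_iff_bipartite_general
    (randomWalkMatrix_mem_rowStochastic hnonneg hdeg) (by simpa only [hedge] using hreach)
end

section
/- For 0 ≤ u ≤ 1, every complex eigenvalue μ of Q = I - (1-u)Wᵀ (i.e., every root of the characteristic polynomial of Q over ℂ) satisfies Re μ ≥ u. -/
open Matrix

/-!
Each column of `(1 - u) Wᵀ` has absolute sum `|1 - u|`, because `W` is stochastic. By Gershgorin's
theorem all eigenvalues of `(1 - u) Wᵀ` lie in the disc of radius `|1 - u|` about `0`, so those of
`Q` lie in the disc of the same radius about `1`, whose leftmost point is `u` when `u ≤ 1`.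
-/

section

variable {ι K : Type*} [Fintype ι] [DecidableEq ι]

section NormedField

variable [NormedField K] {M : Matrix ι ι K} {r : ℝ} {μ : K}

theorem norm_le_of_hasEigenvalue_of_sum_row_norm_le (hM : ∀ i, ∑ j, ‖M i j‖ ≤ r)
    (hμ : Module.End.HasEigenvalue (toLin' M) μ) : ‖μ‖ ≤ r := by
  obtain ⟨k, hk⟩ := eigenvalue_mem_ball hμ
  rw [mem_closedBall_iff_norm] at hk
  calc ‖μ‖ ≤ ‖M k k‖ + ‖μ - M k k‖ := norm_le_norm_add_norm_sub' μ (M k k)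
    _ ≤ ‖M k k‖ + ∑ j ∈ Finset.univ.erase k, ‖M k j‖ := by gcongr
    _ = ∑ j, ‖M k j‖ := Finset.add_sum_erase _ (fun j ↦ ‖M k j‖) (Finset.mem_univ k)
    _ ≤ r := hM k

theorem norm_le_of_mem_spectrum_of_sum_col_norm_le (hM : ∀ j, ∑ i, ‖M i j‖ ≤ r)
    (hμ : μ ∈ spectrum K M) : ‖μ‖ ≤ r := by
  refine norm_le_of_hasEigenvalue_of_sum_row_norm_le (M := Mᵀ) hM ?_
  rwa [Module.End.hasEigenvalue_iff_isRoot_charpoly, charpoly_toLin', charpoly_transpose,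
    ← mem_spectrum_iff_isRoot_charpoly]

theorem norm_one_sub_le_of_mem_spectrum_one_sub (hM : ∀ j, ∑ i, ‖M i j‖ ≤ r)
    (hμ : μ ∈ spectrum K (1 - M)) : ‖1 - μ‖ ≤ r := by
  have one_sub_mem : 1 - μ ∈ spectrum K (1 - (1 - M)) := by
    rw [← map_one (algebraMap K (Matrix ι ι K)), ← spectrum.singleton_sub_eq, map_one]
    exact Set.sub_mem_sub rfl hμ
  rw [sub_sub_cancel] at one_sub_mem
  exact norm_le_of_mem_spectrum_of_sum_col_norm_le hM one_sub_mem

end NormedField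

theorem mem_rowStochastic_of_eq_div_sum_row [Field K] [LinearOrder K] [IsStrictOrderedRing K]
    {A W : Matrix ι ι K} (hA : ∀ i j, 0 ≤ A i j) (hdeg : ∀ i, 0 < ∑ j, A i j)
    (hW : ∀ i j, W i j = A i j / ∑ k, A i k) : W ∈ rowStochastic K ι := by
  rw [mem_rowStochastic_iff_sum]
  refine ⟨fun i j ↦ ?_, fun i ↦ ?_⟩
  · rw [hW]
    exact div_nonneg (hA i j) (hdeg i).le
  · simp_rw [hW, ← Finset.sum_div]
    exact div_self (hdeg i).ne'

variable {W : Matrix ι ι ℝ}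

theorem sum_col_norm_smul_transpose_of_mem_rowStochastic (hW : W ∈ rowStochastic ℝ ι) (c : ℝ)
    (j : ι) : ∑ i, ‖((c • Wᵀ).map Complex.ofReal) i j‖ = |c| := by
  have norm_entry (i : ι) : ‖((c • Wᵀ).map Complex.ofReal) i j‖ = |c| * W j i := by
    rw [map_apply, Complex.norm_real, Matrix.smul_apply, transpose_apply, norm_smul,
      Real.norm_eq_abs, Real.norm_of_nonneg (nonneg_of_mem_rowStochastic hW)]
  simp_rw [norm_entry, ← Finset.mul_sum, sum_row_of_mem_rowStochastic hW, mul_one]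

theorem norm_one_sub_le_of_isRoot_charpoly_pagerank (hW : W ∈ rowStochastic ℝ ι) {u : ℝ} {mu : ℂ}
    (hmu : ((1 - (1 - u) • Wᵀ).map Complex.ofReal).charpoly.IsRoot mu) :
    ‖1 - mu‖ ≤ |1 - u| := by
  rw [← mem_spectrum_iff_isRoot_charpoly, Matrix.map_sub _ Complex.ofReal_sub,
    Matrix.map_one _ Complex.ofReal_zero Complex.ofReal_one] at hmu
  exact norm_one_sub_le_of_mem_spectrum_one_sub
    (fun j ↦ (sum_col_norm_smul_transpose_of_mem_rowStochastic hW (1 - u) j).le) hmu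

theorem pagerank_operator_eigenvalue_re_ge_general (hW : W ∈ rowStochastic ℝ ι) {u : ℝ}
    (hu1 : u ≤ 1) {mu : ℂ}
    (hmu : ((1 - (1 - u) • Wᵀ).map Complex.ofReal).charpoly.IsRoot mu) : u ≤ mu.re := by
  have one_sub_re_le : 1 - mu.re ≤ 1 - u :=
    calc 1 - mu.re = (1 - mu).re := by rw [Complex.sub_re, Complex.one_re]
      _ ≤ ‖1 - mu‖ := Complex.re_le_norm _
      _ ≤ |1 - u| := norm_one_sub_le_of_isRoot_charpoly_pagerank hW hmu
      _ = 1 - u := abs_of_nonneg (sub_nonneg.2 hu1)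
  exact (sub_le_sub_iff_left 1).1 one_sub_re_le

end

/-- For `0 ≤ u ≤ 1`, every complex eigenvalue `μ` of `Q = I - (1-u) Wᵀ` (i.e. every root of
the characteristic polynomial of `Q` over `ℂ`) satisfies `Re μ ≥ u`. -/
theorem pagerank_operator_eigenvalue_re_ge
    (n : ℕ) (hn : 1 ≤ n) (A : Matrix (Fin n) (Fin n) ℝ)
    (hsymm : ∀ i j, A i j = A j i)
    (h01 : ∀ i j, A i j = 0 ∨ A i j = 1)
    (hdiag : ∀ i, A i i = 0)
    (hdeg : ∀ i, 0 < ∑ j, A i j)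
    (W : Matrix (Fin n) (Fin n) ℝ)
    (hW : ∀ i j, W i j = A i j / ∑ k, A i k)
    (u : ℝ) (hu0 : 0 ≤ u) (hu1 : u ≤ 1)
    (Q : Matrix (Fin n) (Fin n) ℝ)
    (hQ : Q = 1 - (1 - u) • Wᵀ)
    (mu : ℂ)
    (hmu : (Matrix.charpoly (Q.map (Complex.ofReal ·))).IsRoot mu) :
    u ≤ mu.re := by
  have hA (i j) : 0 ≤ A i j := (h01 i j).elim Eq.ge fun h ↦ h ▸ zero_le_one
  exact pagerank_operator_eigenvalue_re_ge_general
    (mem_rowStochastic_of_eq_div_sum_row hA hdeg hW) hu1 (hQ ▸ hmu)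
end

section
/- For 0 < u < 1, let λ_1, …, λ_n be the roots (with multiplicity, over ℂ) of the characteristic polynomial of W; then trace(Q⁻¹) = Σ_{k=1}^n 1/(1 - (1-u)λ_k). Consequently, since λ = 1 is an eigenvalue of W (contributing the term 1/u), the average transit time of the Page Rank walk equals ⟨T⟩ = trace(Q⁻¹) - 1/u = Σ over the remaining eigenvalues λ_k ≠ those accounting for the term 1/u of 1/(1 - (1-u)λ_k); formally: trace(Q⁻¹) - 1/u = (Σ_{λ ∈ roots of charpoly(W) over ℂ} 1/(1-(1-u)λ)) - 1/u. -/
open Matrix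

/-!
The logarithmic derivative of `det (x - M)` at `x` is the trace of the resolvent `(x - M)⁻¹`, and
when the characteristic polynomial splits it is also `∑ 1 / (x - z)` over its roots. For `c ≠ 0`,
`1 - c M` is `c` times `x - M` at `x = c⁻¹`.
-/

section ResolventTrace

open Polynomial

variable {ι R S K : Type*} [Fintype ι] [DecidableEq ι] [CommRing R] [CommRing S] [Field K]

theorem eval_zero_derivative_charpoly {M : Matrix ι ι R} (hM : IsUnit M) :
    M.charpoly.derivative.eval 0 = -(M.charpoly.eval 0 * M⁻¹.trace) := by
  have hdet : IsUnit M.det := (isUnit_iff_isUnit_det M).mp hM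
  obtain ⟨a, charpoly_eq⟩ : ∃ a : R, M.charpoly = C a * M⁻¹.charpolyRev := by
    refine ⟨(-1) ^ Fintype.card ι * Ring.inverse M⁻¹.det, ?_⟩
    simpa [nonsing_inv_nonsing_inv M hdet] using
      charpoly_inv M⁻¹ (isUnit_nonsing_inv_iff.mpr hM)
  have derivative_eval : M⁻¹.charpolyRev.derivative.eval 0 = -M⁻¹.trace := by
    simp [← coeff_zero_eq_eval_zero, coeff_derivative]
  simp [charpoly_eq, derivative_eval]

theorem eval_derivative_charpoly {M : Matrix ι ι R} {x : R} (hM : IsUnit (scalar ι x - M)) :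
    M.charpoly.derivative.eval x = M.charpoly.eval x * (scalar ι x - M)⁻¹.trace := by
  have isUnit_sub : IsUnit (M - scalar ι x) := by simpa only [neg_sub] using hM.neg
  have inv_sub : (M - scalar ι x)⁻¹ = -(scalar ι x - M)⁻¹ :=
    inv_eq_right_inv <| by
      rw [← neg_sub, neg_mul_neg, mul_nonsing_inv _ ((isUnit_iff_isUnit_det _).mp hM)]
  have derivative_eq := eval_zero_derivative_charpoly isUnit_sub
  rw [charpoly_sub_scalar, inv_sub] at derivative_eq
  simpa [-scalar_apply, derivative_comp] using derivative_eq

theorem trace_inv_scalar_sub {M : Matrix ι ι K} (hsplits : M.charpoly.Splits) {x : K}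
    (hM : IsUnit (scalar ι x - M)) :
    (scalar ι x - M)⁻¹.trace = (M.charpoly.roots.map fun z ↦ 1 / (x - z)).sum := by
  have eval_ne_zero : M.charpoly.eval x ≠ 0 := by
    rw [eval_charpoly]
    exact ((isUnit_iff_isUnit_det _).mp hM).ne_zero
  rw [← hsplits.eval_derivative_div_eval_of_ne_zero eval_ne_zero, eval_derivative_charpoly hM,
    mul_div_cancel_left₀ _ eval_ne_zero]

theorem trace_inv_one_sub_smul {M : Matrix ι ι K} (hsplits : M.charpoly.Splits) {c : K}
    (hM : IsUnit (1 - c • M)) :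
    (1 - c • M)⁻¹.trace = (M.charpoly.roots.map fun z ↦ 1 / (1 - c * z)).sum := by
  obtain rfl | hc := eq_or_ne c 0
  · have card_roots : M.charpoly.roots.card = Fintype.card ι := by
      rw [← hsplits.natDegree_eq_card_roots, charpoly_natDegree_eq_dim]
    simp [card_roots]
  have factor : 1 - c • M = Units.mk0 c hc • (scalar ι c⁻¹ - M) := by
    rw [Units.smul_mk0, smul_sub, scalar_apply, ← smul_one_eq_diagonal, smul_inv_smul₀ hc]
  have isUnit_sub : IsUnit (scalar ι c⁻¹ - M) := by rwa [factor, isUnit_smul_iff] at hM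
  calc (1 - c • M)⁻¹.trace = c⁻¹ * (scalar ι c⁻¹ - M)⁻¹.trace := by
        rw [factor, inv_smul' _ _ ((isUnit_iff_isUnit_det _).mp isUnit_sub), trace_smul]
        rfl
    _ = (M.charpoly.roots.map fun z ↦ c⁻¹ * (1 / (c⁻¹ - z))).sum := by
        rw [trace_inv_scalar_sub hsplits isUnit_sub, Multiset.sum_map_mul_left]
    _ = (M.charpoly.roots.map fun z ↦ 1 / (1 - c * z)).sum := by
        refine congrArg Multiset.sum (Multiset.map_congr rfl fun z _ ↦ ?_)
        rw [one_div, one_div, ← mul_inv, mul_sub, mul_inv_cancel₀ hc]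

theorem mapMatrix_nonsing_inv (f : R →+* S) {M : Matrix ι ι R} (hM : IsUnit M) :
    f.mapMatrix M⁻¹ = (f.mapMatrix M)⁻¹ := by
  refine (inv_eq_right_inv ?_).symm
  rw [← map_mul, mul_nonsing_inv M ((isUnit_iff_isUnit_det M).mp hM), map_one]

theorem pagerank_trace_inverse_eigenvalue_sum_general (f : R →+* K) (W : Matrix ι ι R) (u : R)
    (hsplits : (W.map f).charpoly.Splits) (hQ : IsUnit (1 - (1 - u) • Wᵀ)) :
    f (1 - (1 - u) • Wᵀ)⁻¹.trace
      = ((W.map f).charpoly.roots.map fun z ↦ 1 / (1 - (1 - f u) * z)).sum := by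
  have map_eq : f.mapMatrix (1 - (1 - u) • Wᵀ) = 1 - (1 - f u) • (W.map f)ᵀ := by
    ext i j
    simp [one_apply, apply_ite f]
  have isUnit_map : IsUnit (1 - (1 - f u) • (W.map f)ᵀ) := map_eq ▸ hQ.map f.mapMatrix
  rw [← charpoly_transpose] at hsplits ⊢
  calc f (1 - (1 - u) • Wᵀ)⁻¹.trace = (f.mapMatrix (1 - (1 - u) • Wᵀ)⁻¹).trace :=
        AddMonoidHom.map_trace f _
    _ = (1 - (1 - f u) • (W.map f)ᵀ)⁻¹.trace := by rw [mapMatrix_nonsing_inv f hQ, map_eq]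
    _ = _ := trace_inv_one_sub_smul hsplits isUnit_map

end ResolventTrace

/-- For `0 < u < 1`, with `λ₁, …, λₙ` the complex roots (with multiplicity) of the
characteristic polynomial of `W`, `trace(Q⁻¹) = ∑ₖ 1/(1 - (1-u) λₖ)`; consequently the
average transit time `⟨T⟩ = trace(Q⁻¹) - 1/u` equals the same sum minus the term `1/u`
contributed by the eigenvalue `λ = 1` of `W`. -/
theorem pagerank_trace_inverse_eigenvalue_sum
    (n : ℕ) (hn : 1 ≤ n) (A : Matrix (Fin n) (Fin n) ℝ)
    (hsymm : ∀ i j, A i j = A j i)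
    (h01 : ∀ i j, A i j = 0 ∨ A i j = 1)
    (hdiag : ∀ i, A i i = 0)
    (hdeg : ∀ i, 0 < ∑ j, A i j)
    (W : Matrix (Fin n) (Fin n) ℝ)
    (hW : ∀ i j, W i j = A i j / ∑ k, A i k)
    (u : ℝ) (hu0 : 0 < u) (hu1 : u < 1)
    (Q : Matrix (Fin n) (Fin n) ℝ)
    (hQ : Q = 1 - (1 - u) • Wᵀ)
    (hQunit : IsUnit Q) :
    ((Q⁻¹.trace : ℝ) : ℂ)
      = ((Matrix.charpoly (W.map (Complex.ofReal ·))).roots.map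
          (fun lam => 1 / (1 - ((1 : ℂ) - (u : ℂ)) * lam))).sum
    ∧ ((Q⁻¹.trace : ℝ) : ℂ) - 1 / (u : ℂ)
      = ((Matrix.charpoly (W.map (Complex.ofReal ·))).roots.map
          (fun lam => 1 / (1 - ((1 : ℂ) - (u : ℂ)) * lam))).sum - 1 / (u : ℂ) := by
  subst hQ
  have h := pagerank_trace_inverse_eigenvalue_sum_general Complex.ofRealHom W u
    (IsAlgClosed.splits _) hQunit
  exact ⟨h, congrArg (· - 1 / (u : ℂ)) h⟩
end
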